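/- Let 0 ≤ r1, r2 ≤ n and 0 ≤ s ≤ min(r1, n − r1, r2, n − r2). Then for every integer k: ω^{r1,r2}(k; n) · λ_s^{r1,r2}(k; n) = ([n]_{2s} / ([n−r1]_s [r2]_s)) · Σ_{j=0}^s (−1)^j binom(s, j) · ω^{r1−s, r2−s}(k − j; n − 2s). (This is the Rodrigues formula: ω^{r1,r2}(·;n) λ_s^{r1,r2}(·;n) = ([n]_{2s}/([n−r1]_s[r2]_s)) ∇^s ω^{r1−s,r2−s}(·; n−2s), where ∇h(k) = h(k) − h(k−1).) -/

import Mathlib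

/-- Falling factorial `z(z-1)⋯(z-k+1)` for complex `z`. -/
noncomputable def cfall (z : ℂ) (k : ℕ) : ℂ := ∏ i ∈ Finset.range k, (z - i)

/-- Generalized binomial coefficient `binom(t, j)` for complex `t`. -/
noncomputable def cbinom (t : ℂ) (j : ℕ) : ℂ := cfall t j / (Nat.factorial j)

/-- The Hahn kernel `λ_s^{r1,r2}(t; m)` with ambient parameter `m`. -/
noncomputable def hahn (m r1 r2 s : ℕ) (t : ℂ) : ℂ :=
  ∑ j ∈ Finset.range (s + 1),
    (-1 : ℂ) ^ j * cbinom t j * cfall (s : ℂ) j * cfall ((m : ℂ) - s + 1) j /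
      (cfall ((m : ℂ) - r1) j * cfall (r2 : ℂ) j)

/-- The Hahn weight `ω^{r1,r2}(k; m)`, extended by `0` outside of the natural range. -/
noncomputable def hahnWeight (m r1 r2 : ℕ) (k : ℤ) : ℂ :=
  if 0 ≤ k ∧ k ≤ (r2 : ℤ) ∧ 0 ≤ (r1 : ℤ) - r2 + k ∧ k ≤ (m : ℤ) - r1 then
    (m.factorial : ℂ) /
      ((k.toNat.factorial : ℂ) * ((r2 - k.toNat).factorial : ℂ) *
        (((r1 : ℤ) - r2 + k).toNat.factorial : ℂ) * (((m : ℤ) - r1 - k).toNat.factorial : ℂ))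
  else 0

/-!
Let `Λ_s = [n-r1]_s [r2]_s λ_s` be the kernel cleared of its denominators. It satisfies the backward
shift relation
`ω^{r1+1,r2+1}(k; n+2) Λ_{s+1}(k) = (n+2)(n+1) ∇(ω^{r1,r2}(·; n) Λ_s)(k)`,
where `Λ_{s+1}` has the parameters of the weight on its left, and the Rodrigues formula is the
`s`-fold iteration of this relation. The quotients of `(n+2)(n+1) ω^{r1,r2}(k; n)` and
`(n+2)(n+1) ω^{r1,r2}(k-1; n)` by `ω^{r1+1,r2+1}(k; n+2)` are the polynomials `(r2+1-k)(n-r1+1-k)`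
and `k(r1-r2+k)`, so the relation reduces to a contiguity relation for `Λ_s` with these
coefficients, which holds over any commutative ring.

The operator `∇` appears as `-Δ_[-1]`.
-/

open Finset fwdDiff Polynomial

/-- The falling factorial of the informal statement, over any ring. -/
local notation "[" x "]_" k:max => Polynomial.eval x (descPochhammer _ k)

section FallingFactorial

variable {R : Type*} [CommRing R]

theorem eval_descPochhammer_succ_left (x : R) (k : ℕ) : [x]_(k + 1) = x * [x - 1]_k := by
  simp [descPochhammer_succ_left]

theorem eval_descPochhammer_add (x : R) (i k : ℕ) : [x]_(i + k) = [x]_i * [x - i]_k := by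
  simp [← descPochhammer_mul]

theorem eval_descPochhammer_add_one (x : R) (k : ℕ) :
    [x + 1]_k = [x]_k + k * [x]_(k - 1) := by
  cases k with
  | zero => simp
  | succ k =>
    rw [eval_descPochhammer_succ_left, add_sub_cancel_right, descPochhammer_succ_eval,
      Nat.add_sub_cancel]
    push_cast
    ring

end FallingFactorial

theorem cfall_eq_eval_descPochhammer (z : ℂ) (k : ℕ) : cfall z k = [z]_k :=
  (descPochhammer_eval_eq_prod_range k z).symm

theorem cfall_natCast_ne_zero {a k : ℕ} (h : k ≤ a) : cfall a k ≠ 0 := by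
  rw [cfall_eq_eval_descPochhammer, descPochhammer_eval_eq_descFactorial, Nat.cast_ne_zero]
  exact (Nat.descFactorial_pos.2 h).ne'

theorem neg_one_pow_smul_fwdDiff_neg_iter {M G : Type*} [AddCommGroup M] [AddCommGroup G] (h : M)
    (f : M → G) (s : ℕ) (y : M) :
    (-1 : ℤ) ^ s • (Δ_[-h])^[s] f y =
      ∑ j ∈ range (s + 1), ((-1 : ℤ) ^ j * s.choose j) • f (y - j • h) := by
  rw [fwdDiff_iter_eq_sum_shift, smul_sum]
  refine sum_congr rfl fun j hj => ?_
  have sign : (-1 : ℤ) ^ s * (-1) ^ (s - j) = (-1) ^ j := by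
    obtain ⟨i, rfl⟩ := Nat.exists_eq_add_of_le (mem_range_succ_iff.1 hj)
    rw [Nat.add_sub_cancel_left, pow_add, mul_assoc, ← mul_pow, neg_one_mul, neg_neg, one_pow,
      mul_one]
  rw [smul_smul, ← mul_assoc, sign, smul_neg, ← sub_eq_add_neg]

theorem sum_antidiagonal_choose_mul_fst {R : Type*} [Semiring R] (f : ℕ → ℕ → R) (s : ℕ) :
    ∑ p ∈ antidiagonal s, (s.choose p.1 * p.1 : R) * f p.1 (p.2 + 1) =
      ∑ p ∈ antidiagonal s, (s.choose p.1 * p.2 : R) * f (p.1 + 1) p.2 := by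
  cases s with
  | zero => simp
  | succ s =>
    rw [Finset.Nat.sum_antidiagonal_succ, Finset.Nat.sum_antidiagonal_succ']
    simp only [Nat.cast_zero, mul_zero, zero_mul, zero_add]
    refine sum_congr rfl fun p hp => ?_
    have absorption : (s + 1).choose (p.1 + 1) * (p.1 + 1) = (s + 1).choose p.1 * (p.2 + 1) := by
      rw [Nat.choose_succ_right_eq, ← mem_antidiagonal.1 hp, add_assoc, Nat.add_sub_cancel_left]
    rw [← Nat.cast_mul, ← Nat.cast_mul, absorption]

section HahnNumerator

variable {R : Type*} [CommRing R]

/-- The Hahn kernel cleared of its denominators: `[n - r1]_s [r2]_s λ_s^{r1,r2}(t; n)` is the value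
at `N = n`, `x = n - r1`, `y = r2`. Summing over pairs `(i, s - i)` avoids truncated subtraction. -/
noncomputable def hahnNumerator (s : ℕ) (N x y t : R) : R :=
  ∑ p ∈ antidiagonal s, (s.choose p.1 : R) *
    ((-1) ^ p.1 * [t]_p.1 * [N - s + 1]_p.1 * ([x - p.1]_p.2 * [y - p.1]_p.2))

theorem hahnNumerator_succ_eq_sum (s : ℕ) (N x y t : R) :
    hahnNumerator (s + 1) N x y t = ∑ p ∈ antidiagonal s, (s.choose p.1 : R) *
      ((-1) ^ p.1 * [N - s - 1]_p.1 * ([t]_p.1 * ([x - p.1]_(p.2 + 1) * [y - p.1]_(p.2 + 1)) -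
        (N - p.1) * [t]_(p.1 + 1) * ([x - p.1 - 1]_p.2 * [y - p.1 - 1]_p.2))) := by
  -- After Pascal's rule the first half of the sum carries `[M + 1]_i = [M]_i + i [M]_(i-1)`, where
  -- `M = N - s - 1`; `shift` moves the second of these terms onto the other half.
  have pascal := sum_antidiagonal_choose_succ_mul (fun i k => (-1) ^ i * [t]_i *
    [N - (s + 1 : ℕ) + 1]_i * ([x - i]_k * [y - i]_k)) s
  have shift := sum_antidiagonal_choose_mul_fst (fun i k => (-1) ^ i * [t]_i *
    [N - s - 1]_(i - 1) * ([x - i]_k * [y - i]_k)) s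
  rw [← sub_eq_zero, ← sum_sub_distrib] at shift
  rw [hahnNumerator, pascal, ← sum_add_distrib, ← sub_eq_zero, ← sum_sub_distrib, ← shift]
  refine sum_congr rfl fun p hp => ?_
  have s_eq_add : (s : R) = p.1 + p.2 := by rw [← mem_antidiagonal.1 hp, Nat.cast_add]
  rw [← Nat.choose_symm_of_eq_add (mem_antidiagonal.1 hp).symm,
    show N - (s + 1 : ℕ) + 1 = N - s - 1 + 1 by push_cast; ring,
    eval_descPochhammer_succ_left (N - s - 1 + 1), eval_descPochhammer_add_one]
  simp only [Nat.add_sub_cancel, add_sub_cancel_right, Nat.cast_add, Nat.cast_one, ← sub_sub]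
  rw [s_eq_add]
  ring

/-- With `N = n`, `x = n - r1`, `y = r2`, the coefficients are those of
`mul_hahnWeight_eq_mul_hahnWeight_succ` and `mul_hahnWeight_sub_one_eq_mul_hahnWeight_succ`. -/
theorem hahnNumerator_succ (s : ℕ) (N x y t : R) :
    hahnNumerator (s + 1) (N + 2) (x + 1) (y + 1) t =
      (y + 1 - t) * (x + 1 - t) * hahnNumerator s N x y t -
        t * (N - x - y + t) * hahnNumerator s N x y (t - 1) := by
  rw [hahnNumerator_succ_eq_sum, hahnNumerator, hahnNumerator, mul_sum, mul_sum,
    ← sum_sub_distrib]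
  refine sum_congr rfl fun p _ => ?_
  have ht : t * [t - 1]_p.1 = [t]_p.1 * (t - p.1) := by
    rw [← eval_descPochhammer_succ_left, descPochhammer_succ_eval]
  rw [eval_descPochhammer_succ_left (x + 1 - p.1), eval_descPochhammer_succ_left (y + 1 - p.1),
    descPochhammer_succ_eval, show N + 2 - s - 1 = N - s + 1 by ring,
    show x + 1 - p.1 - 1 = x - p.1 by ring, show y + 1 - p.1 - 1 = y - p.1 by ring]
  linear_combination (s.choose p.1 : R) * (-1) ^ p.1 * [N - s + 1]_p.1 *
    ([x - p.1]_p.2 * [y - p.1]_p.2) * (N - x - y + t) * ht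

end HahnNumerator

theorem cbinom_mul_cfall_natCast (t : ℂ) (s i : ℕ) :
    cbinom t i * cfall s i = s.choose i * cfall t i := by
  have : (i.factorial : ℂ) ≠ 0 := Nat.cast_ne_zero.2 i.factorial_ne_zero
  rw [cbinom, cfall_eq_eval_descPochhammer s, descPochhammer_eval_eq_descFactorial,
    Nat.descFactorial_eq_factorial_mul_choose]
  push_cast
  field_simp

theorem hahn_mul_cfall_mul_cfall {m r1 r2 s : ℕ} (h1 : cfall ((m : ℂ) - r1) s ≠ 0)
    (h2 : cfall (r2 : ℂ) s ≠ 0) (t : ℂ) :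
    hahn m r1 r2 s t * (cfall ((m : ℂ) - r1) s * cfall (r2 : ℂ) s) =
      hahnNumerator s (m : ℂ) (m - r1) r2 t := by
  rw [hahn, hahnNumerator, sum_mul, Finset.Nat.sum_antidiagonal_eq_sum_range_succ_mk]
  refine sum_congr rfl fun i hi => ?_
  obtain ⟨k, rfl⟩ := Nat.exists_eq_add_of_le (mem_range_succ_iff.1 hi)
  have hchoose := cbinom_mul_cfall_natCast t (i + k) i
  simp only [cfall_eq_eval_descPochhammer, eval_descPochhammer_add _ i k,
    Nat.add_sub_cancel_left] at h1 h2 hchoose ⊢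
  have h1_left := left_ne_zero_of_mul h1
  have h2_left := left_ne_zero_of_mul h2
  field_simp
  linear_combination
    [(m : ℂ) - (i + k : ℕ) + 1]_i * [(m : ℂ) - r1 - i]_k * [(r2 : ℂ) - i]_k * hchoose

theorem inv_Gamma_intCast_add_one (m : ℤ) :
    (Complex.Gamma (m + 1))⁻¹ = if 0 ≤ m then (m.toNat.factorial : ℂ)⁻¹ else 0 := by
  split_ifs with hm
  · lift m to ℕ using hm
    simp [Complex.Gamma_nat_eq_factorial]
  · obtain ⟨j, rfl⟩ : ∃ j : ℕ, m = -j - 1 := ⟨(-m - 1).toNat, by omega⟩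
    simp [Complex.Gamma_neg_nat_eq_zero]

-- In Mathlib `Gamma` has the junk value `0` at its poles, so that `(Gamma (m + 1))⁻¹` is `1 / m!`
-- extended by zero and encodes the range conditions of the weight.
theorem hahnWeight_eq_inv_Gamma (m r1 r2 : ℕ) (k : ℤ) :
    hahnWeight m r1 r2 k = m.factorial * ((Complex.Gamma (k + 1))⁻¹ *
      (Complex.Gamma (r2 - k + 1))⁻¹ * (Complex.Gamma (r1 - r2 + k + 1))⁻¹ *
        (Complex.Gamma (m - r1 - k + 1))⁻¹) := by
  have hk := inv_Gamma_intCast_add_one k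
  have hb := inv_Gamma_intCast_add_one (r2 - k)
  have hc := inv_Gamma_intCast_add_one (r1 - r2 + k)
  have hd := inv_Gamma_intCast_add_one (m - r1 - k)
  push_cast at hk hb hc hd
  rw [hk, hb, hc, hd, hahnWeight]
  by_cases h : 0 ≤ k ∧ k ≤ (r2 : ℤ) ∧ 0 ≤ (r1 : ℤ) - r2 + k ∧ k ≤ (m : ℤ) - r1
  · rw [if_pos h, if_pos (by omega), if_pos (by omega), if_pos (by omega), if_pos (by omega),
      show (r2 - k).toNat = r2 - k.toNat by omega]
    simp only [div_eq_mul_inv, mul_inv]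
  · rw [if_neg h]
    have outside : ¬0 ≤ k ∨ ¬0 ≤ r2 - k ∨ ¬0 ≤ r1 - r2 + k ∨ ¬0 ≤ m - r1 - k := by omega
    rcases outside with h | h | h | h <;> simp only [if_neg h, mul_zero, zero_mul]

theorem mul_hahnWeight_eq_mul_hahnWeight_succ (n r1 r2 : ℕ) (k : ℤ) :
    (n + 2) * (n + 1) * hahnWeight n r1 r2 k =
      (r2 + 1 - k) * (n - r1 + 1 - k) * hahnWeight (n + 2) (r1 + 1) (r2 + 1) k := by
  have hb := Complex.one_div_Gamma_eq_self_mul_one_div_Gamma_add_one (r2 - k + 1)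
  have hd := Complex.one_div_Gamma_eq_self_mul_one_div_Gamma_add_one (n - r1 - k + 1)
  simp only [hahnWeight_eq_inv_Gamma, Nat.factorial_succ]
  rw [hb, hd]
  push_cast
  ring_nf

theorem mul_hahnWeight_sub_one_eq_mul_hahnWeight_succ (n r1 r2 : ℕ) (k : ℤ) :
    (n + 2) * (n + 1) * hahnWeight n r1 r2 (k - 1) =
      k * (r1 - r2 + k) * hahnWeight (n + 2) (r1 + 1) (r2 + 1) k := by
  have ha := Complex.one_div_Gamma_eq_self_mul_one_div_Gamma_add_one k
  have hc := Complex.one_div_Gamma_eq_self_mul_one_div_Gamma_add_one (r1 - r2 + k)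
  simp only [hahnWeight_eq_inv_Gamma, Nat.factorial_succ]
  push_cast
  rw [sub_add_cancel, ← add_sub_assoc, sub_add_cancel, ha, hc]
  ring_nf

theorem hahnWeight_mul_hahnNumerator_succ (n r1 r2 s : ℕ) (k : ℤ) :
    hahnWeight (n + 2) (r1 + 1) (r2 + 1) k *
        hahnNumerator (s + 1) ((n + 2 : ℕ) : ℂ) ((n + 2 : ℕ) - (r1 + 1 : ℕ)) (r2 + 1 : ℕ) k =
      -[((n + 2 : ℕ) : ℂ)]_2 *
        Δ_[-1] (fun j : ℤ => hahnWeight n r1 r2 j * hahnNumerator s (n : ℂ) (n - r1) r2 j) k := by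
  have falling_two : [((n + 2 : ℕ) : ℂ)]_2 = (n + 2) * (n + 1) := by
    rw [descPochhammer_eval_eq_descFactorial]
    simp [Nat.descFactorial_succ, mul_comm]
  rw [falling_two, fwdDiff, ← sub_eq_add_neg]
  push_cast
  rw [show (n + 2 - (r1 + 1) : ℂ) = n - r1 + 1 by ring, hahnNumerator_succ]
  linear_combination
    -hahnNumerator s (n : ℂ) (n - r1) r2 k * mul_hahnWeight_eq_mul_hahnWeight_succ n r1 r2 k +
    hahnNumerator s (n : ℂ) (n - r1) r2 (k - 1) *
      mul_hahnWeight_sub_one_eq_mul_hahnWeight_succ n r1 r2 k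

theorem hahnWeight_mul_hahnNumerator (n r1 r2 s : ℕ) (k : ℤ) :
    hahnWeight (n + 2 * s) (r1 + s) (r2 + s) k *
        hahnNumerator s ((n + 2 * s : ℕ) : ℂ) ((n + 2 * s : ℕ) - (r1 + s : ℕ)) (r2 + s : ℕ) k =
      [((n + 2 * s : ℕ) : ℂ)]_(2 * s) * ((-1) ^ s * (Δ_[-1])^[s] (hahnWeight n r1 r2) k) := by
  induction s generalizing k with
  | zero => simp [hahnNumerator]
  | succ s ih =>
    have falling_add : [((n + 2 * s + 2 : ℕ) : ℂ)]_(2 * s + 2) =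
        [((n + 2 * s + 2 : ℕ) : ℂ)]_2 * [((n + 2 * s : ℕ) : ℂ)]_(2 * s) := by
      rw [add_comm (2 * s) 2, eval_descPochhammer_add]
      simp
    rw [show 2 * (s + 1) = 2 * s + 2 by rfl, ← add_assoc, ← add_assoc, ← add_assoc,
      hahnWeight_mul_hahnNumerator_succ, fwdDiff, ih, ih, falling_add,
      Function.iterate_succ_apply', fwdDiff]
    ring

/-- Rodrigues formula: for all integers `k`,
`ω^{r1,r2}(k;n) λ_s^{r1,r2}(k;n) = ([n]_{2s}/([n-r1]_s [r2]_s)) ∇^s ω^{r1-s,r2-s}(k; n-2s)`. -/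
theorem stmt_16 (n r1 r2 s : ℕ) (h1 : r1 ≤ n) (h2 : r2 ≤ n)
    (hs : s ≤ min (min r1 (n - r1)) (min r2 (n - r2))) (k : ℤ) :
    hahnWeight n r1 r2 k * hahn n r1 r2 s (k : ℂ) =
      (cfall (n : ℂ) (2 * s) / (cfall ((n : ℂ) - r1) s * cfall (r2 : ℂ) s)) *
        ∑ j ∈ Finset.range (s + 1),
          (-1 : ℂ) ^ j * (s.choose j : ℂ) * hahnWeight (n - 2 * s) (r1 - s) (r2 - s) (k - j) := by
  have hd1 : cfall ((n : ℂ) - r1) s ≠ 0 := by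
    rw [← Nat.cast_sub h1]
    exact cfall_natCast_ne_zero (by omega)
  have hd2 : cfall (r2 : ℂ) s ≠ 0 := cfall_natCast_ne_zero (by omega)
  rw [div_mul_eq_mul_div, eq_div_iff (mul_ne_zero hd1 hd2), mul_assoc,
    hahn_mul_cfall_mul_cfall hd1 hd2, cfall_eq_eval_descPochhammer]
  have rodrigues := hahnWeight_mul_hahnNumerator (n - 2 * s) (r1 - s) (r2 - s) s k
  have iterated_difference :=
    neg_one_pow_smul_fwdDiff_neg_iter 1 (hahnWeight (n - 2 * s) (r1 - s) (r2 - s)) s k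
  simp only [zsmul_eq_mul, nsmul_one, Int.cast_mul, Int.cast_pow, Int.cast_neg, Int.cast_one,
    Int.cast_natCast] at iterated_difference
  rwa [iterated_difference, Nat.sub_add_cancel (by omega : 2 * s ≤ n),
    Nat.sub_add_cancel (by omega : s ≤ r1), Nat.sub_add_cancel (by omega : s ≤ r2)] at rodrigues
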